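/- Let G be an n-vertex cubic graph with girth at least 9 such that every independent set in G has size less than 0.456n. If C1, C2, C4 are pairwise disjoint vertex sets such that C_i is i-independent for i ∈ {1,2,4}, then |C1| + |C2| + |C4| ≤ 0.7174n. -/

import Mathlib

open SimpleGraph Finset

/-- A set `S` is `i`-independent in `G` if any two distinct vertices of `S`
are at distance at least `i + 1`. -/
def pIndep {V : Type*} (G : SimpleGraph V) (i : ℕ) (S : Finset V) : Prop :=
  ∀ x ∈ S, ∀ y ∈ S, x ≠ y → ((i + 1 : ℕ) : ℕ∞) ≤ G.edist x y

/-- The number of ordered pairs `(a, b)` with `a ∈ A`, `b ∈ B` and `a` adjacent to `b`. -/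
def adjCount {V : Type*} (G : SimpleGraph V) [DecidableRel G.Adj] (A B : Finset V) : ℕ :=
  ∑ a ∈ A, ∑ b ∈ B, if G.Adj a b then 1 else 0

section AdjCount

variable {V : Type*} (G : SimpleGraph V) [DecidableRel G.Adj]

lemma adjCount_comm (A B : Finset V) : adjCount G A B = adjCount G B A := by
  unfold adjCount
  rw [Finset.sum_comm]
  simp only [G.adj_comm]

lemma adjCount_union_left [DecidableEq V] {A B : Finset V} (h : Disjoint A B) (C : Finset V) :
    adjCount G (A ∪ B) C = adjCount G A C + adjCount G B C :=
  Finset.sum_union h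

lemma adjCount_union_right [DecidableEq V] {A B : Finset V} (h : Disjoint A B) (C : Finset V) :
    adjCount G C (A ∪ B) = adjCount G C A + adjCount G C B := by
  rw [adjCount_comm, adjCount_union_left G h, adjCount_comm G A, adjCount_comm G B]

lemma adjCount_univ_right [Fintype V] {d : ℕ} (hreg : G.IsRegularOfDegree d) (A : Finset V) :
    adjCount G A univ = d * A.card := by
  unfold adjCount
  rw [mul_comm, ← smul_eq_mul, ← Finset.sum_const]
  refine Finset.sum_congr rfl fun a _ => ?_
  rw [← hreg a, ← G.card_neighborFinset_eq_degree a, G.neighborFinset_eq_filter,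
    Finset.card_filter]

lemma adjCount_le_card_filter (A B : Finset V)
    (h : ∀ a ∈ A, ∀ b ∈ B, ∀ c ∈ B, G.Adj a b → G.Adj a c → b = c) :
    adjCount G A B ≤ (A.filter fun a => ∃ b ∈ B, G.Adj a b).card := by
  unfold adjCount
  rw [Finset.card_filter]
  refine Finset.sum_le_sum fun a ha => ?_
  rw [← Finset.card_filter]
  split_ifs with hex
  · rw [Finset.card_le_one]
    intro b hb c hc
    rw [Finset.mem_filter] at hb hc
    exact h a ha b hb.1 c hc.1 hb.2 hc.2
  · rw [Nat.le_zero, Finset.card_eq_zero, Finset.filter_eq_empty_iff]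
    exact fun b hb hab => hex ⟨b, hb, hab⟩

/-- In a `d`-regular graph, the vertices of `S` send at most `d * |Sᶜ|` edges out of `S`. -/
lemma two_mul_card_le_add_adjCount [Fintype V] [DecidableEq V] {d : ℕ}
    (hreg : G.IsRegularOfDegree d) (S : Finset V) :
    2 * (d * S.card) ≤ d * Fintype.card V + adjCount G S S := by
  have hd : Disjoint S Sᶜ := disjoint_compl_right
  have h1 := adjCount_univ_right G hreg S
  have h2 := adjCount_univ_right G hreg Sᶜ
  rw [← Finset.union_compl S, adjCount_union_right G hd] at h1 h2
  rw [adjCount_comm G Sᶜ S] at h2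
  have h3 : d * S.card + d * Sᶜ.card = d * Fintype.card V := by
    rw [← mul_add, Finset.card_add_card_compl]
  omega

end AdjCount

section Indep

variable {V : Type*} {G : SimpleGraph V}

lemma pIndep.eq_of_walk {i : ℕ} {S : Finset V} (hS : pIndep G i S) {x y : V} (hx : x ∈ S)
    (hy : y ∈ S) (w : G.Walk x y) (hw : w.length ≤ i) : x = y := by
  by_contra hne
  have h := (hS x hx y hy hne).trans w.edist_le
  rw [Nat.cast_le] at h
  omega

lemma pIndep.not_adj {i : ℕ} {S : Finset V} (hS : pIndep G i S) (hi : 1 ≤ i) {x y : V}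
    (hx : x ∈ S) (hy : y ∈ S) : ¬ G.Adj x y :=
  fun h => h.ne (hS.eq_of_walk hx hy h.toWalk (by simpa using hi))

lemma pIndep.adjCount_self [DecidableRel G.Adj] {i : ℕ} {S : Finset V} (hS : pIndep G i S)
    (hi : 1 ≤ i) : adjCount G S S = 0 :=
  Finset.sum_eq_zero fun _ hx => Finset.sum_eq_zero fun _ hy => if_neg (hS.not_adj hi hx hy)

lemma pIndep.adjCount_le_card_filter [DecidableRel G.Adj] {i : ℕ} {S : Finset V}
    (hS : pIndep G i S) (hi : 2 ≤ i) (A : Finset V) :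
    adjCount G A S ≤ (A.filter fun a => ∃ b ∈ S, G.Adj a b).card :=
  _root_.adjCount_le_card_filter G A S fun _ _ _ hb _ hc hab hac =>
    hS.eq_of_walk hb hc (.cons hab.symm (.cons hac .nil)) (by simpa using hi)

lemma not_triangle_of_le_egirth (hg : (4 : ℕ∞) ≤ G.egirth) {a b c : V}
    (hab : G.Adj a b) (hbc : G.Adj b c) (hca : G.Adj c a) : False := by
  have h := le_egirth.mp hg a (.cons hab (.cons hbc (.cons hca .nil)))
    (by
      have := hab.ne; have := hbc.ne; have := hca.ne
      simp [Walk.cons_isCycle_iff]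
      grind)
  norm_num at h

lemma eq_of_le_egirth (hg : (5 : ℕ∞) ≤ G.egirth) {a b c d : V} (hab : G.Adj a b)
    (hbc : G.Adj b c) (hcd : G.Adj c d) (hda : G.Adj d a) (hac : a ≠ c) : b = d := by
  by_contra hbd
  have h := le_egirth.mp hg a (.cons hab (.cons hbc (.cons hcd (.cons hda .nil))))
    (by
      have := hab.ne; have := hbc.ne; have := hcd.ne; have := hda.ne
      simp [Walk.cons_isCycle_iff]
      grind)
  norm_num at h

/-- Vertices near a `4`-independent set `C4` that belong to `C2`, or have a neighbour in `C2`,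
can be matched injectively to vertices of `C2`. -/
lemma card_add_card_le_of_pIndep [DecidableEq V] (hg : (5 : ℕ∞) ≤ G.egirth)
    {C1 C2 C4 A B : Finset V} (h12 : Disjoint C1 C2) (h24 : Disjoint C2 C4)
    (hC4 : pIndep G 4 C4) (hA1 : A ⊆ C1) (hB2 : B ⊆ C2)
    (hA2 : ∀ a ∈ A, ∃ u ∈ C2, G.Adj a u) (hA4 : ∀ a ∈ A, ∃ v ∈ C4, G.Adj a v)
    (hB4 : ∀ b ∈ B, ∃ v ∈ C4, G.Adj b v) :
    A.card + B.card ≤ C2.card := by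
  rw [← Finset.card_union_of_disjoint (Finset.disjoint_of_subset_left hA1
    (Finset.disjoint_of_subset_right hB2 h12))]
  refine Finset.card_le_card_of_forall_subsingleton
    (fun c u => (c ∈ B ∧ c = u) ∨ (c ∈ A ∧ G.Adj c u)) ?_ ?_
  · intro c hc
    rcases Finset.mem_union.mp hc with hc | hc
    · obtain ⟨u, hu, hcu⟩ := hA2 c hc
      exact ⟨u, hu, .inr ⟨hc, hcu⟩⟩
    · exact ⟨c, hB2 hc, .inl ⟨hc, rfl⟩⟩
  · have mixed : ∀ u ∈ B, ∀ c ∈ A, ¬ G.Adj c u := by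
      intro u hu c hc hcu
      obtain ⟨v, hv, huv⟩ := hB4 u hu
      obtain ⟨w, hw, hcw⟩ := hA4 c hc
      obtain rfl : v = w := hC4.eq_of_walk hv hw
        (.cons huv.symm (.cons hcu.symm (.cons hcw .nil))) (by simp)
      exact not_triangle_of_le_egirth (le_trans (by norm_num) hg) hcu huv hcw.symm
    rintro u hu c ⟨-, ⟨hcB, rfl⟩ | ⟨hcA, hcu⟩⟩ c' ⟨-, ⟨hcB', hcu'⟩ | ⟨hcA', hcu'⟩⟩
    · exact hcu'.symm
    · exact (mixed c hcB c' hcA' hcu').elim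
    · subst hcu'
      exact (mixed c' hcB' c hcA hcu).elim
    · obtain ⟨v, hv, hcv⟩ := hA4 c hcA
      obtain ⟨w, hw, hcw⟩ := hA4 c' hcA'
      obtain rfl : v = w := hC4.eq_of_walk hv hw
        (.cons hcv.symm (.cons hcu (.cons hcu'.symm (.cons hcw .nil)))) (by simp)
      exact eq_of_le_egirth hg hcu.symm hcv hcw.symm hcu'
        fun h => Finset.disjoint_left.mp h24 hu (h ▸ hv)

end Indep

theorem stmt7 {V : Type*} [Fintype V] [DecidableEq V] (G : SimpleGraph V)
    [DecidableRel G.Adj] (hreg : G.IsRegularOfDegree 3)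
    (hg : (9 : ℕ∞) ≤ G.egirth)
    (hα : ∀ I : Finset V, (∀ x ∈ I, ∀ y ∈ I, ¬ G.Adj x y) →
      (I.card : ℝ) < 0.456 * Fintype.card V)
    (C1 C2 C4 : Finset V)
    (h12 : Disjoint C1 C2) (h14 : Disjoint C1 C4) (h24 : Disjoint C2 C4)
    (hC1 : pIndep G 1 C1) (hC2 : pIndep G 2 C2) (hC4 : pIndep G 4 C4) :
    (C1.card : ℝ) + C2.card + C4.card ≤ 0.7174 * Fintype.card V := by
  have hx : (C1.card : ℝ) < 0.456 * Fintype.card V :=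
    hα C1 fun x hx y hy => hC1.not_adj le_rfl hx hy
  have hd : Disjoint (C1 ∪ C2) C4 := Finset.disjoint_union_left.mpr ⟨h14, h24⟩
  have hcount := two_mul_card_le_add_adjCount G hreg (C1 ∪ C2 ∪ C4)
  have hS : adjCount G (C1 ∪ C2 ∪ C4) (C1 ∪ C2 ∪ C4) =
      2 * (adjCount G C1 C2 + adjCount G C1 C4 + adjCount G C2 C4) := by
    simp only [adjCount_union_left G hd, adjCount_union_right G hd, adjCount_union_left G h12,
      adjCount_union_right G h12, hC1.adjCount_self le_rfl, hC2.adjCount_self one_le_two,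
      hC4.adjCount_self (by norm_num), adjCount_comm G C2 C1, adjCount_comm G C4 C1,
      adjCount_comm G C4 C2]
    ring
  rw [hS, Finset.card_union_of_disjoint hd, Finset.card_union_of_disjoint h12] at hcount
  set P := C1.filter fun a => ∃ b ∈ C2, G.Adj a b
  set Q1 := C1.filter fun a => ∃ b ∈ C4, G.Adj a b
  set Q2 := C2.filter fun a => ∃ b ∈ C4, G.Adj a b
  have e12 : adjCount G C1 C2 ≤ P.card := hC2.adjCount_le_card_filter le_rfl C1
  have e14 : adjCount G C1 C4 ≤ Q1.card := hC4.adjCount_le_card_filter (by norm_num) C1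
  have e24 : adjCount G C2 C4 ≤ Q2.card := hC4.adjCount_le_card_filter (by norm_num) C2
  have hPx : P.card ≤ C1.card := Finset.card_filter_le _ _
  have hPQ : P.card + Q1.card ≤ C1.card + (P ∩ Q1).card := by
    rw [← Finset.card_union_add_card_inter]
    gcongr
    exact Finset.union_subset (Finset.filter_subset _ _) (Finset.filter_subset _ _)
  have hy : (P ∩ Q1).card + Q2.card ≤ C2.card :=
    card_add_card_le_of_pIndep (le_trans (by norm_num) hg) h12 h24 hC4
      (Finset.inter_subset_left.trans (Finset.filter_subset _ _)) (Finset.filter_subset _ _)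
      (fun a ha => (Finset.mem_filter.mp (Finset.mem_inter.mp ha).1).2)
      (fun a ha => (Finset.mem_filter.mp (Finset.mem_inter.mp ha).2).2)
      (fun b hb => (Finset.mem_filter.mp hb).2)
  have hz : adjCount G C1 C4 + adjCount G C2 C4 ≤ 3 * C4.card := by
    rw [← adjCount_univ_right G hreg C4, ← Finset.union_compl (C1 ∪ C2),
      adjCount_union_right G disjoint_compl_right, adjCount_union_right G h12,
      adjCount_comm G C1, adjCount_comm G C2]
    exact Nat.le_add_right _ _
  have key : 9 * (C1.card + C2.card + C4.card) ≤ 6 * Fintype.card V + C1.card := by omega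
  have key' : 9 * ((C1.card : ℝ) + C2.card + C4.card) ≤ 6 * Fintype.card V + C1.card := by
    exact_mod_cast key
  linarith
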